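/- arXiv:1901.11029 — 2 statements merged into one kernel-verified Lean document; each statement's English description precedes it below -/
import Mathlib

section
/- For every ρ ≥ 1, the function g(r) := (1 − r)/(1 − tanh(ρ·artanh(r))) is monotone nondecreasing on the interval (0, 1): for all 0 < r₁ ≤ r₂ < 1, g(r₁) ≤ g(r₂). -/
noncomputable section

/-- Inverse hyperbolic tangent: artanh x = (1/2)·ln((1+x)/(1−x)). -/
def artanh (x : ℝ) : ℝ := (1/2) * Real.log ((1 + x) / (1 - x))

lemma aux_one_sub_tanh (x : ℝ) : 1 - Real.tanh x = 2 / (1 + Real.exp (2 * x)) := by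
  have h : Real.exp (2 * x) = Real.exp x * Real.exp x := by rw [← Real.exp_add]; ring_nf
  have hp := Real.exp_pos x
  rw [Real.tanh_eq_sinh_div_cosh, Real.sinh_eq, Real.cosh_eq, Real.exp_neg, h]
  field_simp
  ring

lemma aux_ratio (ρ r : ℝ) (h0 : 0 < r) (h1 : r < 1) :
    (1 - r) / (1 - Real.tanh (ρ * artanh r))
      = (1 + ((1 + r) / (1 - r)) * ((1 + r) / (1 - r)) ^ (ρ - 1)) / (1 + (1 + r) / (1 - r)) := by
  have hr : 0 < 1 - r := by linarith
  have hy : 0 < (1 + r) / (1 - r) := by positivity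
  have e : Real.exp (2 * (ρ * artanh r))
      = ((1 + r) / (1 - r)) * ((1 + r) / (1 - r)) ^ (ρ - 1) := by
    rw [Real.rpow_sub_one hy.ne', Real.rpow_def_of_pos hy, mul_div_cancel₀ _ hy.ne']
    unfold artanh
    ring_nf
  rw [aux_one_sub_tanh, e]
  have hs : 1 + (1 + r) / (1 - r) = 2 / (1 - r) := by
    field_simp
    ring
  rw [hs, div_div_eq_mul_div, div_div_eq_mul_div, mul_comm]

/-- For `ρ ≥ 1`, the function `r ↦ (1 − r)/(1 − tanh(ρ·artanh r))` is monotone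
nondecreasing on `(0, 1)`. -/
theorem boundary_ratio_monotone (ρ : ℝ) (hρ : 1 ≤ ρ) :
    ∀ r₁ r₂ : ℝ, 0 < r₁ → r₁ ≤ r₂ → r₂ < 1 →
      (1 - r₁) / (1 - Real.tanh (ρ * artanh r₁))
        ≤ (1 - r₂) / (1 - Real.tanh (ρ * artanh r₂)) := by
  intro r₁ r₂ h0 h12 h1
  rw [aux_ratio ρ r₁ h0 (by linarith), aux_ratio ρ r₂ (by linarith) h1]
  have ha : 1 ≤ (1 + r₁) / (1 - r₁) := by
    rw [le_div_iff₀ (by linarith)]; linarith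
  have hab : (1 + r₁) / (1 - r₁) ≤ (1 + r₂) / (1 - r₂) := by
    rw [div_le_div_iff₀ (by linarith) (by linarith)]; nlinarith
  generalize (1 + r₁) / (1 - r₁) = a at *
  generalize (1 + r₂) / (1 - r₂) = b at *
  have hc : 1 ≤ a ^ (ρ - 1) := Real.one_le_rpow ha (by linarith)
  have hcd : a ^ (ρ - 1) ≤ b ^ (ρ - 1) :=
    Real.rpow_le_rpow (by linarith) hab (by linarith)
  generalize a ^ (ρ - 1) = c at *
  generalize b ^ (ρ - 1) = d at *
  rw [div_le_div_iff₀ (by linarith) (by linarith)]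
  have k1 : a * (c - 1) ≤ b * (d - 1) :=
    mul_le_mul hab (by linarith) (by linarith) (by linarith)
  have k2 : 0 ≤ a * b * (d - c) :=
    mul_nonneg (mul_nonneg (by linarith) (by linarith)) (by linarith)
  linarith
end
end

section
/- In the genus-2 surface group G (the quotient of the free group on a₁, b₁, a₂, b₂ by the normal closure of the relator a₁b₁a₁⁻¹b₁⁻¹a₂b₂a₂⁻¹b₂⁻¹), with γ := a₂⁻¹b₁a₁b₁⁻¹, there exists a group automorphism φ of G with φ(a₁) = a₁, φ(b₁) = γ⁻¹·b₁, φ(a₂) = γ⁻¹·a₂·γ, and φ(b₂) = b₂·γ. -/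
/-- The genus-2 surface relator `a₁b₁a₁⁻¹b₁⁻¹a₂b₂a₂⁻¹b₂⁻¹` in the free group on
four generators `a₁ = 0, b₁ = 1, a₂ = 2, b₂ = 3`. -/
def surfaceRelator₂ : FreeGroup (Fin 4) :=
  FreeGroup.of 0 * FreeGroup.of 1 * (FreeGroup.of 0)⁻¹ * (FreeGroup.of 1)⁻¹ *
    FreeGroup.of 2 * FreeGroup.of 3 * (FreeGroup.of 2)⁻¹ * (FreeGroup.of 3)⁻¹

/-- The genus-2 surface group `π₁(Σ₂)`, presented with the single relator
`a₁b₁a₁⁻¹b₁⁻¹a₂b₂a₂⁻¹b₂⁻¹`. -/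
abbrev SurfaceGroup₂ : Type := PresentedGroup ({surfaceRelator₂} : Set (FreeGroup (Fin 4)))

namespace SurfaceGroup₂

/-- The generator `a₁`. -/
def a₁ : SurfaceGroup₂ := PresentedGroup.of 0
/-- The generator `b₁`. -/
def b₁ : SurfaceGroup₂ := PresentedGroup.of 1
/-- The generator `a₂`. -/
def a₂ : SurfaceGroup₂ := PresentedGroup.of 2
/-- The generator `b₂`. -/
def b₂ : SurfaceGroup₂ := PresentedGroup.of 3

/-- The separating curve `γ = a₂⁻¹b₁a₁b₁⁻¹` between the two handles. -/
def γ : SurfaceGroup₂ := a₂⁻¹ * b₁ * a₁ * b₁⁻¹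
/-- The loop `δ = b₂b₁` encircling both holes. -/
def δ : SurfaceGroup₂ := b₂ * b₁
/-- The loop `ta₂ = b₂a₂b₂⁻¹`, i.e. `a₂` transported along `b₂`. -/
def ta₂ : SurfaceGroup₂ := b₂ * a₂ * b₂⁻¹

end SurfaceGroup₂

open SurfaceGroup₂

/-- The relation of the surface group, for the named generators. -/
theorem SurfaceGroup₂.relation_aux :
    a₁ * b₁ * a₁⁻¹ * b₁⁻¹ * a₂ * b₂ * a₂⁻¹ * b₂⁻¹ = 1 :=
  PresentedGroup.one_of_mem (rels := {surfaceRelator₂}) (Set.mem_singleton _)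

/-- Universal property of the surface group. -/
theorem SurfaceGroup₂.exists_hom_aux {H : Type} [Group H] (x y z w : H)
    (h : x * y * x⁻¹ * y⁻¹ * z * w * z⁻¹ * w⁻¹ = 1) :
    ∃ f : SurfaceGroup₂ →* H, f a₁ = x ∧ f b₁ = y ∧ f a₂ = z ∧ f b₂ = w := by
  have hr : ∀ r ∈ ({surfaceRelator₂} : Set (FreeGroup (Fin 4))),
      FreeGroup.lift ![x, y, z, w] r = 1 := by
    intro r hr
    rw [Set.mem_singleton_iff.mp hr]
    simpa [surfaceRelator₂] using h
  refine ⟨PresentedGroup.toGroup hr, ?_, ?_, ?_, ?_⟩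
  · exact PresentedGroup.toGroup.of hr
  · exact PresentedGroup.toGroup.of hr
  · exact PresentedGroup.toGroup.of hr
  · exact PresentedGroup.toGroup.of hr

/-- An endomorphism fixing the generators is the identity. -/
theorem SurfaceGroup₂.hom_eq_id_aux (f : SurfaceGroup₂ →* SurfaceGroup₂)
    (h0 : f a₁ = a₁) (h1 : f b₁ = b₁) (h2 : f a₂ = a₂) (h3 : f b₂ = b₂) :
    f = MonoidHom.id _ := by
  apply PresentedGroup.ext
  intro i
  fin_cases i
  · exact h0
  · exact h1
  · exact h2
  · exact h3

/-- The Dehn twist `D_γ` acts on `π₁(Σ₂)` as an automorphism fixing `a₁`,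
sending `b₁ ↦ γ⁻¹b₁`, `a₂ ↦ γ⁻¹a₂γ`, and `b₂ ↦ b₂γ`. -/
theorem dehn_twist_gamma_automorphism :
    ∃ φ : SurfaceGroup₂ ≃* SurfaceGroup₂,
      φ a₁ = a₁ ∧ φ b₁ = γ⁻¹ * b₁ ∧ φ a₂ = γ⁻¹ * a₂ * γ ∧ φ b₂ = b₂ * γ := by
  obtain ⟨f, f0, f1, f2, f3⟩ := SurfaceGroup₂.exists_hom_aux a₁ (γ⁻¹ * b₁) (γ⁻¹ * a₂ * γ) (b₂ * γ)
    (by rw [← SurfaceGroup₂.relation_aux]; simp only [γ]; group)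
  obtain ⟨g, g0, g1, g2, g3⟩ := SurfaceGroup₂.exists_hom_aux a₁ (γ * b₁) (γ * a₂ * γ⁻¹) (b₂ * γ⁻¹)
    (by rw [← SurfaceGroup₂.relation_aux]; simp only [γ]; group)
  have fγ : f γ = γ := by
    have : f γ = (f a₂)⁻¹ * f b₁ * f a₁ * (f b₁)⁻¹ := by simp [γ]
    rw [this, f0, f1, f2]; simp only [γ]; group
  have gγ : g γ = γ := by
    have : g γ = (g a₂)⁻¹ * g b₁ * g a₁ * (g b₁)⁻¹ := by simp [γ]
    rw [this, g0, g1, g2]; simp only [γ]; group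
  have hgf : g.comp f = MonoidHom.id _ := by
    apply SurfaceGroup₂.hom_eq_id_aux <;>
      simp only [MonoidHom.comp_apply, f0, f1, f2, f3, map_mul, map_inv, gγ, g0, g1, g2, g3] <;>
      group
  have hfg : f.comp g = MonoidHom.id _ := by
    apply SurfaceGroup₂.hom_eq_id_aux <;>
      simp only [MonoidHom.comp_apply, f0, f1, f2, f3, map_mul, map_inv, fγ, g0, g1, g2, g3] <;>
      group
  exact ⟨MonoidHom.toMulEquiv f g hgf hfg, f0, f1, f2, f3⟩
end
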